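/- arXiv:math/0506344 — 2 statements merged into one kernel-verified Lean document; each statement's English description precedes it below -/
import Mathlib

section
/- Let R be a commutative ring. Suppose given two short exact sequences of R-modules 0 → W' →^ι T →^g L → 0 and 0 → W →^{ι'} T' →^{g'} L' → 0, where L and L' are projective R-modules. Let Φ : T × T' → R be an R-bilinear form, and let e' : W' × L' → R and e : L × W → R be perfect R-bilinear pairings. Assume the compatibilities Φ(ι(w'), t') = e'(w', g'(t')) for all w' ∈ W', t' ∈ T', and Φ(t, ι'(w)) = e(g(t), w) for all t ∈ T, w ∈ W. Then Φ is a perfect pairing: both induced maps T → Hom_R(T', R) and T' → Hom_R(T, R) are bijective. -/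
/-!
The pairing `Φ` is the middle vertical map of a commutative diagram with exact rows
```
        W'    →     T     →    L     → 0
        ↓ e'        ↓ Φ        ↓ e
0 → Hom(L', N) → Hom(T', N) → Hom(W, N)
```
whose lower row is the dual of `W → T' → L' → 0`. Since the outer vertical maps are bijective, the
commuting squares force `W' → T` to be injective and `Hom(T', N) → Hom(W, N)` to be surjective, and
the five lemma applies. Bijectivity of `Φ.flip` is the same statement with the two sequences
interchanged.
-/

section FiveLemma

variable {R M₁ M₂ M₃ N₁ N₂ N₃ : Type*} [CommRing R]
  [AddCommGroup M₁] [AddCommGroup M₂] [AddCommGroup M₃]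
  [AddCommGroup N₁] [AddCommGroup N₂] [AddCommGroup N₃]
  [Module R M₁] [Module R M₂] [Module R M₃] [Module R N₁] [Module R N₂] [Module R N₃]

theorem bijective_of_bijective_of_bijective_of_right_exact_of_left_exact
    {f₁ : M₁ →ₗ[R] M₂} {f₂ : M₂ →ₗ[R] M₃} {g₁ : N₁ →ₗ[R] N₂} {g₂ : N₂ →ₗ[R] N₃}
    {i₁ : M₁ →ₗ[R] N₁} {i₂ : M₂ →ₗ[R] N₂} {i₃ : M₃ →ₗ[R] N₃}
    (hc₁ : g₁ ∘ₗ i₁ = i₂ ∘ₗ f₁) (hc₂ : g₂ ∘ₗ i₂ = i₃ ∘ₗ f₂)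
    (hf : Function.Exact f₁ f₂) (hf₂ : Function.Surjective f₂)
    (hg₁ : Function.Injective g₁) (hg : Function.Exact g₁ g₂)
    (hi₁ : Function.Bijective i₁) (hi₃ : Function.Bijective i₃) :
    Function.Bijective i₂ := by
  have hf₁ : Function.Injective f₁ := by
    have h : Function.Injective (i₂ ∘ₗ f₁) := hc₁ ▸ hg₁.comp hi₁.injective
    exact Function.Injective.of_comp h
  have hg₂ : Function.Surjective g₂ := by
    have h : Function.Surjective (g₂ ∘ₗ i₂) := hc₂ ▸ hi₃.surjective.comp hf₂
    exact Function.Surjective.of_comp h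
  exact LinearMap.bijective_of_surjective_of_bijective_of_bijective_of_injective
    (0 : Unit →ₗ[R] M₁) f₁ f₂ (0 : M₃ →ₗ[R] Unit) (0 : Unit →ₗ[R] N₁) g₁ g₂ (0 : N₃ →ₗ[R] Unit)
    LinearMap.id i₁ i₂ i₃ LinearMap.id (by simp) hc₁ hc₂ (by simp)
    ((LinearMap.exact_zero_iff_injective _ _).2 hf₁) hf
    ((LinearMap.exact_zero_iff_surjective _ _).2 hf₂)
    ((LinearMap.exact_zero_iff_injective _ _).2 hg₁) hg
    ((LinearMap.exact_zero_iff_surjective _ _).2 hg₂)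
    Function.surjective_id hi₁ hi₃ Function.injective_id

end FiveLemma

section Pairing

variable {R W' T L W T' L' N : Type*} [CommRing R]
  [AddCommGroup W'] [AddCommGroup T] [AddCommGroup L]
  [AddCommGroup W] [AddCommGroup T'] [AddCommGroup L'] [AddCommGroup N]
  [Module R W'] [Module R T] [Module R L]
  [Module R W] [Module R T'] [Module R L'] [Module R N]
  {ι : W' →ₗ[R] T} {g : T →ₗ[R] L} {ι' : W →ₗ[R] T'} {g' : T' →ₗ[R] L'}
  {Φ : T →ₗ[R] T' →ₗ[R] N} {e' : W' →ₗ[R] L' →ₗ[R] N} {e : L →ₗ[R] W →ₗ[R] N}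

theorem bijective_pairing_of_exact_of_exact
    (hexact : Function.Exact ι g) (hg : Function.Surjective g)
    (hexact' : Function.Exact ι' g') (hg' : Function.Surjective g')
    (he' : Function.Bijective e') (he : Function.Bijective e)
    (hcompat' : ∀ w' t', Φ (ι w') t' = e' w' (g' t'))
    (hcompat : ∀ t w, Φ t (ι' w) = e (g t) w) :
    Function.Bijective Φ := by
  have left_square : g'.lcomp R N ∘ₗ e' = Φ ∘ₗ ι :=
    LinearMap.ext₂ fun w' t' => (hcompat' w' t').symm
  have right_square : ι'.lcomp R N ∘ₗ Φ = e ∘ₗ g := LinearMap.ext₂ hcompat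
  exact bijective_of_bijective_of_bijective_of_right_exact_of_left_exact
    left_square right_square hexact hg
    (LinearMap.lcomp_injective_of_surjective g' hg')
    (LinearMap.exact_lcomp_of_exact_of_surjective N hexact' hg') he' he

theorem stmt_5_general
    (hexact : Function.Exact ι g) (hg : Function.Surjective g)
    (hexact' : Function.Exact ι' g') (hg' : Function.Surjective g')
    (he' : Function.Bijective e' ∧ Function.Bijective e'.flip)
    (he : Function.Bijective e ∧ Function.Bijective e.flip)
    (hcompat' : ∀ w' t', Φ (ι w') t' = e' w' (g' t'))
    (hcompat : ∀ t w, Φ t (ι' w) = e (g t) w) :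
    Function.Bijective Φ ∧ Function.Bijective Φ.flip :=
  ⟨bijective_pairing_of_exact_of_exact hexact hg hexact' hg' he'.1 he.1 hcompat' hcompat,
    bijective_pairing_of_exact_of_exact (Φ := Φ.flip) hexact' hg' hexact hg he.2 he'.2
      (fun w t => hcompat t w) (fun t' w' => hcompat' w' t')⟩

end Pairing

/-- Linear-algebra core of the perfectness of Deligne's pairing (Theorem 4.1):
given short exact sequences `0 → W' →ι T →g L → 0` and `0 → W →ι' T' →g' L' → 0`
of `R`-modules with `L, L'` projective, a bilinear form `Φ : T × T' → R`, and perfect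
pairings `e' : W' × L' → R`, `e : L × W → R` such that `Φ(ι w', t') = e'(w', g' t')`
and `Φ(t, ι' w) = e(g t, w)`, the pairing `Φ` is perfect. -/
theorem stmt_5 {R : Type*} [CommRing R]
    {W' T L W T' L' : Type*}
    [AddCommGroup W'] [AddCommGroup T] [AddCommGroup L]
    [AddCommGroup W] [AddCommGroup T'] [AddCommGroup L']
    [Module R W'] [Module R T] [Module R L]
    [Module R W] [Module R T'] [Module R L']
    [Module.Projective R L] [Module.Projective R L']
    (ι : W' →ₗ[R] T) (g : T →ₗ[R] L)
    (ι' : W →ₗ[R] T') (g' : T' →ₗ[R] L')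
    (hι : Function.Injective ι) (hg : Function.Surjective g)
    (hexact : LinearMap.range ι = LinearMap.ker g)
    (hι' : Function.Injective ι') (hg' : Function.Surjective g')
    (hexact' : LinearMap.range ι' = LinearMap.ker g')
    (Φ : T →ₗ[R] T' →ₗ[R] R)
    (e' : W' →ₗ[R] L' →ₗ[R] R) (e : L →ₗ[R] W →ₗ[R] R)
    (he' : Function.Bijective e' ∧ Function.Bijective e'.flip)
    (he : Function.Bijective e ∧ Function.Bijective e.flip)
    (hcompat' : ∀ (w' : W') (t' : T'), Φ (ι w') t' = e' w' (g' t'))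
    (hcompat : ∀ (t : T) (w : W), Φ t (ι' w) = e (g t) w) :
    Function.Bijective Φ ∧ Function.Bijective Φ.flip :=
  stmt_5_general (LinearMap.exact_iff.2 hexact.symm) hg (LinearMap.exact_iff.2 hexact'.symm) hg'
    he' he hcompat' hcompat
end

section
/- Let R be a commutative ring and A = R[x, t, t⁻¹] the Laurent polynomial ring in t over the polynomial ring R[x]. Let Ω_{A/R} be the module of Kähler differentials with universal derivation d, and let ω = f·dx + g·t⁻¹·dt ∈ Ω_{A/R} with f, g ∈ A. Let B = R[x, x', t, t⁻¹] and let μ, p₁, p₂ : A → B be the R-algebra homomorphisms fixing t and sending x to x + x', to x, and to x' respectively; let C = R[x, t, t⁻¹, s, s⁻¹] and let ν, q₁, q₂ : A → C be the R-algebra homomorphisms fixing x and sending t to t·s, to t, and to s respectively. If the induced maps on Kähler differentials satisfy μ*(ω) = p₁*(ω) + p₂*(ω) in Ω_{B/R} and ν*(ω) = q₁*(ω) + q₂*(ω) in Ω_{C/R}, then f = 0 and g is the image in A of a polynomial h ∈ R[X] satisfying h(X + Y) = h(X) + h(Y) in R[X, Y]; in particular ω = h(x)·t⁻¹·dt. 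-/
set_option synthInstance.maxHeartbeats 1000000
set_option maxHeartbeats 1000000

/-!
The form `ω` is detected by contracting it with vector fields. On `C = R[x, t, t⁻¹, s, s⁻¹]`, the
field `∂/∂x` turns the second condition into `f(x, ts) = f(x, t) + f(x, s)`, and `s ∂/∂s` turns it
into `g(x, ts) = g(x, s)`. The coefficient of `s⁰` in the former is `f₀(x) = f(x, t) + f₀(x)`, so
`f = 0`; that of `sⁿ` in the latter is `gₙ(x) tⁿ = gₙ(x)`, so `g` does not involve `t`. Finally
`t ∂/∂t` on `B = R[x, x', t, t⁻¹]` turns the first condition into the additivity of `g`.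
-/

section MonoidAlgebra

open AddMonoidAlgebra

theorem basis_constr_single {A M : Type*} [CommSemiring A] (w : M → A) (m : M) (a : A) :
    (AddMonoidAlgebra.basis M A).constr A (fun n ↦ single n (w n)) (single m a) =
      single m (w m * a) := by
  have hsingle : single m a = a • AddMonoidAlgebra.basis M A m := by simp
  rw [hsingle, map_smul, Module.Basis.constr_basis, smul_single, smul_eq_mul, mul_comm]

variable {R A M : Type*} [CommSemiring R] [AddCommMonoid M]

theorem map_mul_eq_smul_add_smul_of_single {N : Type*} [CommSemiring A] [Algebra R A]
    [AddCommMonoid N] [Module R N] [Module (AddMonoidAlgebra A M) N]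
    {D : AddMonoidAlgebra A M →ₗ[R] N}
    (hD : ∀ m n a b, D (single m a * single n b) =
      single m a • D (single n b) + single n b • D (single m a))
    (p q : AddMonoidAlgebra A M) : D (p * q) = p • D q + q • D p := by
  induction p using AddMonoidAlgebra.induction_linear with
  | zero => simp only [zero_mul, map_zero, zero_smul, smul_zero, add_zero]
  | add p₁ p₂ h₁ h₂ => simp only [add_mul, map_add, h₁, h₂, add_smul, smul_add]; abel
  | single m a =>
    induction q using AddMonoidAlgebra.induction_linear with
    | zero => simp only [mul_zero, map_zero, zero_smul, smul_zero, add_zero]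
    | add q₁ q₂ h₁ h₂ => simp only [mul_add, map_add, h₁, h₂, add_smul, smul_add]; abel
    | single n b => exact hD m n a b

variable [CommRing A]

/-- The extension of a derivation `d` of `A` to the monoid algebra `A[M]` that acts on coefficients
and kills the elements of `M`; for `d = ∂/∂x` it is the partial derivative `∂/∂x` of `A[M]`. -/
noncomputable def coeffwiseDerivation [Algebra R A] (d : Derivation R A A) :
    Derivation R (AddMonoidAlgebra A M) (AddMonoidAlgebra A M) :=
  Derivation.mk'
    { toFun := AddMonoidAlgebra.map (d : A →+ A)
      map_add' := AddMonoidAlgebra.map_add _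
      map_smul' := fun r p ↦ by ext; simp }
    (map_mul_eq_smul_add_smul_of_single fun m n a b ↦ by
      simp [single_mul_single, single_add, add_comm n m])

@[simp]
theorem coeffwiseDerivation_single [Algebra R A] (d : Derivation R A A) (m : M) (a : A) :
    coeffwiseDerivation d (single m a) = single m (d a) :=
  map_single _ _ _

/-- The Euler vector field of the monoid algebra `A[M]` attached to an additive weight `w : M → A`,
multiplying the component of degree `m` by `w m`; for `M = ℤ` and `w n = n` it is `T ∂/∂T`. -/
noncomputable def eulerDerivation (w : M →+ A) :
    Derivation A (AddMonoidAlgebra A M) (AddMonoidAlgebra A M) :=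
  Derivation.mk' ((AddMonoidAlgebra.basis M A).constr A fun m ↦ single m (w m))
    (map_mul_eq_smul_add_smul_of_single fun m n a b ↦ by
      simp only [single_mul_single, basis_constr_single, smul_eq_mul, map_add, add_comm n m,
        ← single_add]
      ring_nf)

@[simp]
theorem eulerDerivation_single (w : M →+ A) (m : M) (a : A) :
    eulerDerivation w (single m a) = single m (w m * a) :=
  basis_constr_single w m a

end MonoidAlgebra

section LaurentPolynomial

open LaurentPolynomial
open scoped Polynomial

variable {R A B : Type*}

section Derivation

variable [CommRing A]

@[simp]
theorem coeffwiseDerivation_C [CommSemiring R] [Algebra R A] (d : Derivation R A A) (a : A) :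
    coeffwiseDerivation d (C a : A[T;T⁻¹]) = C (d a) :=
  coeffwiseDerivation_single d 0 a

@[simp]
theorem coeffwiseDerivation_T [CommSemiring R] [Algebra R A] (d : Derivation R A A) (n : ℤ) :
    coeffwiseDerivation d (T n : A[T;T⁻¹]) = 0 := by
  rw [T, coeffwiseDerivation_single, d.map_one_eq_zero, AddMonoidAlgebra.single_zero]

@[simp]
theorem eulerDerivation_C (w : ℤ →+ A) (a : A) : eulerDerivation w (C a : A[T;T⁻¹]) = 0 :=
  (eulerDerivation w).map_algebraMap a

@[simp]
theorem eulerDerivation_T (w : ℤ →+ A) (n : ℤ) :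
    eulerDerivation w (T n : A[T;T⁻¹]) = C (w n) * T n := by
  rw [T, eulerDerivation_single, mul_one, single_eq_C_mul_T, T]

end Derivation

section Contraction

variable [CommRing R] [CommRing A] [CommRing B] [Algebra R A] [Algebra R B]

-- The hypothesis on `c` says that `c` is the contraction of `δ` with the pull-back of `dT / T`.
theorem liftKaehlerDifferential_smul_D_add_smul_D (δ : Derivation R B B)
    (φ : A[T;T⁻¹] →ₐ[R] B) {c : B} (hc : δ (φ (T 1)) = c * φ (T 1)) (f g x : A[T;T⁻¹]) :
    δ.liftKaehlerDifferential (φ f • KaehlerDifferential.D R B (φ x) +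
      φ (g * T (-1)) • KaehlerDifferential.D R B (φ (T 1))) = φ f * δ (φ x) + φ g * c := by
  have hg : φ (g * T (-1)) * φ (T 1) = φ g := by
    rw [← map_mul, mul_T_assoc, neg_add_cancel, T_zero, mul_one]
  simp only [map_add, map_smul, Derivation.liftKaehlerDifferential_comp_D, smul_eq_mul, hc, ← hg]
  ring

theorem contraction_eq_add_of_pullback_eq_add (δ : Derivation R B B)
    {φ ψ₁ ψ₂ : A[T;T⁻¹] →ₐ[R] B} {f g x : A[T;T⁻¹]}
    (h : φ f • KaehlerDifferential.D R B (φ x) +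
          φ (g * T (-1)) • KaehlerDifferential.D R B (φ (T 1)) =
        (ψ₁ f • KaehlerDifferential.D R B (ψ₁ x) +
            ψ₁ (g * T (-1)) • KaehlerDifferential.D R B (ψ₁ (T 1))) +
          (ψ₂ f • KaehlerDifferential.D R B (ψ₂ x) +
            ψ₂ (g * T (-1)) • KaehlerDifferential.D R B (ψ₂ (T 1))))
    {c c₁ c₂ : B} (hc : δ (φ (T 1)) = c * φ (T 1)) (hc₁ : δ (ψ₁ (T 1)) = c₁ * ψ₁ (T 1))
    (hc₂ : δ (ψ₂ (T 1)) = c₂ * ψ₂ (T 1)) :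
    φ f * δ (φ x) + φ g * c =
      (ψ₁ f * δ (ψ₁ x) + ψ₁ g * c₁) + (ψ₂ f * δ (ψ₂ x) + ψ₂ g * c₂) := by
  rw [← liftKaehlerDifferential_smul_D_add_smul_D δ φ hc, h, map_add,
    liftKaehlerDifferential_smul_D_add_smul_D δ ψ₁ hc₁,
    liftKaehlerDifferential_smul_D_add_smul_D δ ψ₂ hc₂]

end Contraction

section Hom

theorem coeff_C_mul_T [Semiring A] (a : A) (m n : ℤ) :
    (C a * T m).coeff n = if m = n then a else 0 := by
  rw [← single_eq_C_mul_T, AddMonoidAlgebra.coeff_single, Finsupp.single_apply]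

theorem eq_C_coeff_zero_of_forall_C_mul_T_eq_C [Semiring A] {p : A[T;T⁻¹]}
    (h : ∀ n, C (p.coeff n) * T n = (C (p.coeff n) : A[T;T⁻¹])) : p = C (p.coeff 0) := by
  ext1 n
  rcases eq_or_ne n 0 with rfl | hn
  · simp
  · simpa [coeff_C_mul_T, hn] using congrArg (fun q ↦ q.coeff n) (h n)

-- The homomorphism `u` encodes the powers of a unit of `B`.
theorem map_T_eq_C_mul_T [Semiring A] [CommSemiring B] (φ : A[T;T⁻¹] →* B[T;T⁻¹])
    {u : Multiplicative ℤ →* B} (hT : φ (T 1) = C (u (.ofAdd 1)) * T 1) (n : ℤ) :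
    φ (T n) = C (u (.ofAdd n)) * T n := by
  have hcomp : φ.comp (AddMonoidAlgebra.of A ℤ) =
      (C : B →+* B[T;T⁻¹]).toMonoidHom.comp u * AddMonoidAlgebra.of B ℤ :=
    MonoidHom.ext_mint hT
  exact DFunLike.congr_fun hcomp (.ofAdd n)

theorem coeff_map_eq_mul [Semiring A] [CommSemiring B] {φ : A[T;T⁻¹] →+* B[T;T⁻¹]}
    {σ : A →+* B} {u : Multiplicative ℤ →* B} (hC : ∀ a, φ (C a) = C (σ a))
    (hT : φ (T 1) = C (u (.ofAdd 1)) * T 1) (p : A[T;T⁻¹]) (n : ℤ) :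
    (φ p).coeff n = σ (p.coeff n) * u (.ofAdd n) := by
  induction p using LaurentPolynomial.induction_on' with
  | add p q hp hq =>
    simp only [map_add, AddMonoidAlgebra.coeff_add, Finsupp.add_apply, hp, hq, add_mul]
  | C_mul_T m a =>
    have hTm : φ (T m) = C (u (.ofAdd m)) * T m := map_T_eq_C_mul_T φ.toMonoidHom hT m
    rw [map_mul, hC, hTm, ← mul_assoc, ← map_mul, coeff_C_mul_T, coeff_C_mul_T]
    split_ifs with hmn
    · rw [hmn]
    · rw [map_zero, zero_mul]

variable [CommSemiring R] [CommSemiring B] [Algebra R B]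

theorem algHom_ext_C_X_T_one {φ ψ : R[X][T;T⁻¹] →ₐ[R] B}
    (hX : φ (C Polynomial.X) = ψ (C Polynomial.X)) (hT : φ (T 1) = ψ (T 1)) : φ = ψ :=
  AddMonoidAlgebra.algHom_ext' (MonoidHom.ext_mint hT) (Polynomial.algHom_ext hX)

theorem map_eq_C_map {φ : R[X][T;T⁻¹] →ₐ[R] B[T;T⁻¹]} {ψ : R[X][T;T⁻¹] →ₐ[R] B}
    (hX : φ (C Polynomial.X) = C (ψ (C Polynomial.X))) (hT : φ (T 1) = C (ψ (T 1)))
    (p : R[X][T;T⁻¹]) : φ p = C (ψ p) := by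
  have hφ : φ = (AddMonoidAlgebra.singleZeroAlgHom : B →ₐ[R] B[T;T⁻¹]).comp ψ :=
    algHom_ext_C_X_T_one hX hT
  exact DFunLike.congr_fun hφ p

theorem aeval_C_X (p : R[X]) :
    Polynomial.aeval (C Polynomial.X : R[X][T;T⁻¹]) p = C p := by
  have haeval : Polynomial.aeval (C Polynomial.X : R[X][T;T⁻¹]) =
      (AddMonoidAlgebra.singleZeroAlgHom : R[X] →ₐ[R] R[X][T;T⁻¹]) :=
    Polynomial.algHom_ext (Polynomial.aeval_X _)
  exact DFunLike.congr_fun haeval p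

theorem map_C_eq_C_aeval {φ : R[X][T;T⁻¹] →ₐ[R] B[T;T⁻¹]} {b : B}
    (hX : φ (C Polynomial.X) = C b) (p : R[X]) : φ (C p) = C (Polynomial.aeval b p) := by
  have hcomp : φ.comp AddMonoidAlgebra.singleZeroAlgHom =
      AddMonoidAlgebra.singleZeroAlgHom.comp (Polynomial.aeval b) :=
    Polynomial.algHom_ext (by simpa using! hX)
  exact DFunLike.congr_fun hcomp p

theorem coeff_map_eq_aeval_mul {φ : R[X][T;T⁻¹] →ₐ[R] B[T;T⁻¹]} {b : B}
    {u : Multiplicative ℤ →* B} (hX : φ (C Polynomial.X) = C b)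
    (hT : φ (T 1) = C (u (.ofAdd 1)) * T 1) (p : R[X][T;T⁻¹]) (n : ℤ) :
    (φ p).coeff n = Polynomial.aeval b (p.coeff n) * u (.ofAdd n) :=
  coeff_map_eq_mul (φ := φ.toRingHom) (σ := (Polynomial.aeval b).toRingHom)
    (map_C_eq_C_aeval hX) hT p n

theorem coeff_map_eq_aeval {φ : R[X][T;T⁻¹] →ₐ[R] B[T;T⁻¹]} {b : B}
    (hX : φ (C Polynomial.X) = C b) (hT : φ (T 1) = T 1) (p : R[X][T;T⁻¹]) (n : ℤ) :
    (φ p).coeff n = Polynomial.aeval b (p.coeff n) := by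
  simpa using coeff_map_eq_aeval_mul (u := 1) hX (by simpa using hT) p n

theorem coeff_map_eq_aeval_mul_T {φ : R[X][T;T⁻¹] →ₐ[R] B[T;T⁻¹][T;T⁻¹]} {b : B[T;T⁻¹]}
    (hX : φ (C Polynomial.X) = C b) (hT : φ (T 1) = C (T 1) * T 1) (p : R[X][T;T⁻¹]) (n : ℤ) :
    (φ p).coeff n = Polynomial.aeval b (p.coeff n) * T n :=
  coeff_map_eq_aeval_mul (u := AddMonoidAlgebra.of B ℤ) hX hT p n

end Hom

end LaurentPolynomial

open LaurentPolynomial in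
/-- Example 4.1 of the paper (case `r = 1, d = 0`): let `A = R[x, t, t⁻¹]`,
`ω = f·dx + g·t⁻¹·dt` a differential form on `A` over `R`.  If `ω` satisfies the two
horizontality conditions for the partial group laws (expressed via the `R`-algebra
homomorphisms `μ, p₁, p₂ : A → B = R[x, x', t, t⁻¹]` fixing `t` and sending `x` to
`x + x'`, `x`, `x'`, and `ν, q₁, q₂ : A → C = R[x, t, t⁻¹, s, s⁻¹]` fixing `x` and
sending `t` to `t·s`, `t`, `s`), then `f = 0` and `g = h(x)` for an additive
polynomial `h ∈ R[X]`; in particular `ω = h(x)·t⁻¹·dt`. -/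
theorem stmt_6 {R : Type*} [CommRing R]
    (f g : LaurentPolynomial (Polynomial R))
    (μ p₁ p₂ : LaurentPolynomial (Polynomial R) →ₐ[R]
      LaurentPolynomial (MvPolynomial (Fin 2) R))
    (hμx : μ (C Polynomial.X) = C (MvPolynomial.X 0) + C (MvPolynomial.X 1))
    (hμt : μ (T 1) = T 1)
    (hp₁x : p₁ (C Polynomial.X) = C (MvPolynomial.X 0)) (hp₁t : p₁ (T 1) = T 1)
    (hp₂x : p₂ (C Polynomial.X) = C (MvPolynomial.X 1)) (hp₂t : p₂ (T 1) = T 1)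
    (ν q₁ q₂ : LaurentPolynomial (Polynomial R) →ₐ[R]
      LaurentPolynomial (LaurentPolynomial (Polynomial R)))
    (hνx : ν (C Polynomial.X) = C (C Polynomial.X)) (hνt : ν (T 1) = C (T 1) * T 1)
    (hq₁x : q₁ (C Polynomial.X) = C (C Polynomial.X)) (hq₁t : q₁ (T 1) = C (T 1))
    (hq₂x : q₂ (C Polynomial.X) = C (C Polynomial.X)) (hq₂t : q₂ (T 1) = T 1)
    -- horizontality of `ν₁`: `μ*(ω) = p₁*(ω) + p₂*(ω)` in `Ω_{B/R}`
    (hhoriz₁ :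
      μ f • KaehlerDifferential.D R _ (μ (C Polynomial.X)) +
          μ (g * T (-1)) • KaehlerDifferential.D R _ (μ (T 1)) =
        (p₁ f • KaehlerDifferential.D R _ (p₁ (C Polynomial.X)) +
            p₁ (g * T (-1)) • KaehlerDifferential.D R _ (p₁ (T 1))) +
          (p₂ f • KaehlerDifferential.D R _ (p₂ (C Polynomial.X)) +
            p₂ (g * T (-1)) • KaehlerDifferential.D R _ (p₂ (T 1))))
    -- horizontality of `ν₂`: `ν*(ω) = q₁*(ω) + q₂*(ω)` in `Ω_{C/R}`
    (hhoriz₂ :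
      ν f • KaehlerDifferential.D R _ (ν (C Polynomial.X)) +
          ν (g * T (-1)) • KaehlerDifferential.D R _ (ν (T 1)) =
        (q₁ f • KaehlerDifferential.D R _ (q₁ (C Polynomial.X)) +
            q₁ (g * T (-1)) • KaehlerDifferential.D R _ (q₁ (T 1))) +
          (q₂ f • KaehlerDifferential.D R _ (q₂ (C Polynomial.X)) +
            q₂ (g * T (-1)) • KaehlerDifferential.D R _ (q₂ (T 1)))) :
    f = 0 ∧ ∃ h : Polynomial R,
      (Polynomial.aeval (MvPolynomial.X 0 + MvPolynomial.X 1 : MvPolynomial (Fin 2) R) h =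
        Polynomial.aeval (MvPolynomial.X 0 : MvPolynomial (Fin 2) R) h +
          Polynomial.aeval (MvPolynomial.X 1 : MvPolynomial (Fin 2) R) h) ∧
      g = C h := by
  have hμg : μ g = p₁ g + p₂ g := by
    simpa [hμx, hp₁x, hp₂x] using contraction_eq_add_of_pullback_eq_add
      ((eulerDerivation (Int.castAddHom _)).restrictScalars R) hhoriz₁
      (c := 1) (c₁ := 1) (c₂ := 1) (by simp [hμt]) (by simp [hp₁t]) (by simp [hp₂t])
  have hνg : ν g = q₂ g := by
    simpa [hνx, hq₁x, hq₂x] using contraction_eq_add_of_pullback_eq_add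
      ((eulerDerivation (Int.castAddHom _)).restrictScalars R) hhoriz₂
      (c := 1) (c₁ := 0) (c₂ := 1) (by simp [hνt]) (by simp [hq₁t]) (by simp [hq₂t])
  have hνf : ν f = q₁ f + q₂ f := by
    simpa [hνx, hq₁x, hq₂x] using contraction_eq_add_of_pullback_eq_add
      (coeffwiseDerivation (coeffwiseDerivation Polynomial.derivative')) hhoriz₂
      (c := 0) (c₁ := 0) (c₂ := 0) (by simp [hνt]) (by simp [hq₁t]) (by simp [hq₂t])
  have hf : f = 0 := by
    simpa [coeff_map_eq_aeval_mul_T hνx hνt, coeff_map_eq_aeval hq₂x hq₂t,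
      map_eq_C_map (ψ := AlgHom.id R _) hq₁x hq₁t] using congrArg (fun p ↦ p.coeff 0) hνf
  have hg : g = C (g.coeff 0) := eq_C_coeff_zero_of_forall_C_mul_T_eq_C fun n ↦ by
    simpa only [coeff_map_eq_aeval_mul_T hνx hνt, coeff_map_eq_aeval hq₂x hq₂t, aeval_C_X]
      using congrArg (fun p ↦ p.coeff n) hνg
  refine ⟨hf, g.coeff 0, ?_, hg⟩
  simpa [coeff_map_eq_aeval (hμx.trans (map_add C _ _).symm) hμt, coeff_map_eq_aeval hp₁x hp₁t,
    coeff_map_eq_aeval hp₂x hp₂t] using congrArg (fun p ↦ p.coeff 0) hμg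
end
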